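/- (Lower bound, d = 1.) Let X_1,…,X_n, Y_1,…,Y_n be independent random variables uniformly distributed on [0,1], with empirical measures μ_n = (1/n)Σ_{k=1}^n δ_{X_k} and ν_n = (1/n)Σ_{k=1}^n δ_{Y_k}. Then E(W₁(μ_n,ν_n)) ≥ (1/n)·E( |Σ_{k=1}^n (X_k − Y_k)| ), and consequently there is an absolute constant c > 0 such that E(W₁(μ_n,ν_n)) ≥ c/√n for all n ≥ 1. -/

import Mathlib

open MeasureTheory ProbabilityTheory Real ENNReal

noncomputable section

/-- `γ` is a coupling of `μ` and `ν`. -/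
def IsCoupling {α : Type*} [MeasurableSpace α]
    (γ : Measure (α × α)) (μ ν : Measure α) : Prop :=
  γ.map Prod.fst = μ ∧ γ.map Prod.snd = ν

/-- Kantorovich distance `W₁` on the real line. -/
def W1 (μ ν : Measure ℝ) : ℝ≥0∞ :=
  ⨅ (γ : Measure (ℝ × ℝ)) (_ : IsCoupling γ μ ν),
    ∫⁻ p, ENNReal.ofReal |p.1 - p.2| ∂γ

/-- The uniform distribution on `[0,1]`. -/
def uniformUnit : Measure ℝ := volume.restrict (Set.Icc 0 1)

/-- The empirical measure `(1/n) Σ_k δ_{X_k(ω)}`. -/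
def empMeasure {n : ℕ} {Ω : Type*} [MeasurableSpace Ω]
    (X : Fin n → Ω → ℝ) (ω : Ω) : Measure ℝ :=
  (n : ℝ≥0∞)⁻¹ • ∑ k, Measure.dirac (X k ω)

lemma integrable_emp {n : ℕ} (hn : 1 ≤ n) {Ω : Type*} [MeasurableSpace Ω]
    (X : Fin n → Ω → ℝ) (ω : Ω) : Integrable (fun x : ℝ => x) (empMeasure X ω) := by
  unfold empMeasure
  refine Integrable.smul_measure ?_ (by simp; omega)
  rw [integrable_finsetSum_measure]
  intro i _
  exact integrable_dirac (by simp)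

lemma integral_emp {n : ℕ} {Ω : Type*} [MeasurableSpace Ω]
    (X : Fin n → Ω → ℝ) (ω : Ω) : ∫ x, x ∂(empMeasure X ω) = (1 / n : ℝ) * ∑ k, X k ω := by
  unfold empMeasure
  rw [integral_smul_measure, integral_finsetSum_measure]
  · simp
  · intro i _
    exact integrable_dirac (by simp)

lemma W1_ge {n : ℕ} (hn : 1 ≤ n) {Ω : Type*} [MeasurableSpace Ω]
    (X Y : Fin n → Ω → ℝ) (ω : Ω) :
    ENNReal.ofReal ((1 / n : ℝ) * |∑ k, (X k ω - Y k ω)|) ≤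
      W1 (empMeasure X ω) (empMeasure Y ω) := by
  unfold W1
  refine le_iInf₂ fun γ hγ => ?_
  obtain ⟨h1, h2⟩ := hγ
  have i1 : Integrable (fun p : ℝ × ℝ => p.1) γ := by
    have := integrable_emp hn X ω
    rw [← h1] at this
    exact this.comp_measurable measurable_fst
  have i2 : Integrable (fun p : ℝ × ℝ => p.2) γ := by
    have := integrable_emp hn Y ω
    rw [← h2] at this
    exact this.comp_measurable measurable_snd
  have e1 : ∫ p, p.1 ∂γ = (1 / n : ℝ) * ∑ k, X k ω := by
    rw [← integral_emp, ← h1, integral_map measurable_fst.aemeasurable (by fun_prop)]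
  have e2 : ∫ p, p.2 ∂γ = (1 / n : ℝ) * ∑ k, Y k ω := by
    rw [← integral_emp, ← h2, integral_map measurable_snd.aemeasurable (by fun_prop)]
  rw [← ofReal_integral_eq_lintegral_ofReal (f := fun p : ℝ × ℝ => |p.1 - p.2|) (i1.sub i2).abs (.of_forall fun _ => abs_nonneg _)]
  apply ENNReal.ofReal_le_ofReal
  calc _ = |∫ p, (p.1 - p.2) ∂γ| := by
        rw [integral_sub i1 i2, e1, e2, ← mul_sub, abs_mul, Finset.sum_sub_distrib,
          abs_of_nonneg (by positivity : (0:ℝ) ≤ 1 / n)]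
    _ ≤ _ := abs_integral_le_integral_abs

instance : IsProbabilityMeasure uniformUnit := ⟨by simp [uniformUnit]⟩

section
variable {Ω : Type*} [MeasurableSpace Ω] {P : Measure Ω}

lemma unif_aem {Z : Ω → ℝ} (h : P.map Z = uniformUnit) : AEMeasurable Z P := by
  apply AEMeasurable.of_map_ne_zero
  rw [h]; exact IsProbabilityMeasure.ne_zero _

lemma unif_mem {Z : Ω → ℝ} (h : P.map Z = uniformUnit) : ∀ᵐ ω ∂P, Z ω ∈ Set.Icc (0:ℝ) 1 := by
  apply ae_of_ae_map (unif_aem h) (p := fun x => x ∈ Set.Icc (0:ℝ) 1)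
  rw [h]; exact ae_restrict_mem measurableSet_Icc

lemma unif_int {Z : Ω → ℝ} (h : P.map Z = uniformUnit) (f : ℝ → ℝ) (hf : Continuous f) :
    ∫ ω, f (Z ω) ∂P = ∫ x in (0:ℝ)..1, f x := by
  rw [← integral_map (unif_aem h) hf.aestronglyMeasurable, h, uniformUnit,
    integral_Icc_eq_integral_Ioc, intervalIntegral.integral_of_le zero_le_one]

lemma key_ineq (u : ℝ) : 2 * u ^ 2 - u ^ 4 ≤ 2 * |u| := by
  rw [← sq_abs u, ← Even.pow_abs (by decide : Even 4) u]
  have := abs_nonneg u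
  generalize |u| = v at *
  have : 0 ≤ v ^ 3 - 2 * v + 2 := by nlinarith [sq_nonneg (v - 1)]
  nlinarith

lemma pow_four_le (x : ℝ) : x ^ 4 ≤ 24 * (exp x + exp (-x)) := by
  have := exp_pos x
  have := exp_pos (-x)
  rcases le_total 0 x with h | h
  · have := pow_div_factorial_le_exp x h 4
    norm_num [Nat.factorial] at this
    linarith
  · have := pow_div_factorial_le_exp (-x) (by linarith) 4
    norm_num [Nat.factorial] at this
    nlinarith

lemma main_lower [IsProbabilityMeasure P] {ι : Type*} [Fintype ι] [Nonempty ι] (Z : ι → Ω → ℝ)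
    (e : ι → ℝ) (he : ∀ i, e i = 1 ∨ e i = -1) (hi : iIndepFun Z P)
    (hZ : ∀ i, P.map (Z i) = uniformUnit) :
    Integrable (fun ω => ∑ i, e i * (Z i ω - 1 / 2)) P ∧
    √(Fintype.card ι) / 1000 ≤ ∫ ω, |∑ i, e i * (Z i ω - 1 / 2)| ∂P := by
  set W : ι → Ω → ℝ := fun i ω => e i * (Z i ω - 1 / 2) with hW
  set m : ℝ := (Fintype.card ι : ℝ) with hm
  have hm0 : 0 < m := by simp [hm, Fintype.card_pos]
  have hWi : iIndepFun W P := hi.comp (fun i x => e i * (x - 1 / 2)) (fun i => by fun_prop)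
  have hWm (i) : AEMeasurable (W i) P := by
    have := unif_aem (hZ i)
    simp only [hW]; fun_prop
  have hWb (i) : ∀ᵐ ω ∂P, W i ω ∈ Set.Icc (-1/2:ℝ) (1/2) := by
    filter_upwards [unif_mem (hZ i)] with ω h
    simp only [hW]
    rcases he i with h' | h' <;> rw [h'] <;> constructor <;> linarith [h.1, h.2]
  have hW0 (i) : ∫ ω, W i ω ∂P = 0 := by
    rw [unif_int (hZ i) (fun x => e i * (x - 1/2)) (by fun_prop)]
    norm_num
  have hW2 (i) : ∫ ω, W i ω ^ 2 ∂P = 1 / 12 := by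
    rw [unif_int (hZ i) (fun x => (e i * (x - 1/2)) ^ 2) (by fun_prop)]
    have : ∀ x : ℝ, (e i * (x - 1/2)) ^ 2 = x ^ 2 - x + 1 / 4 := by
      intro x
      rcases he i with h' | h' <;> rw [h'] <;> ring
    simp only [this]
    rw [intervalIntegral.integral_add (by apply Continuous.intervalIntegrable; fun_prop) (by simp),
      intervalIntegral.integral_sub (by apply Continuous.intervalIntegrable; fun_prop) 
       (by apply Continuous.intervalIntegrable; fun_prop)]
    norm_num
  have hsg := HasSubgaussianMGF.sum_of_iIndepFun hWi (s := Finset.univ) 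
    (fun i _ => hasSubgaussianMGF_of_mem_Icc_of_integral_eq_zero (hWm i) (hWb i) (hW0 i))
  have hL2 (i) : MemLp (W i) 2 P := MemLp.of_bound (hWm i).aestronglyMeasurable (1/2) (by
    filter_upwards [hWb i] with ω h
    rw [Real.norm_eq_abs, abs_le]; constructor <;> linarith [h.1, h.2])
  have hSL2 : MemLp (fun ω => ∑ i, W i ω) 2 P := memLp_finsetSum _ fun i _ => hL2 i
  have hS0 : ∫ ω, ∑ i, W i ω ∂P = 0 := by
    rw [integral_finsetSum _ fun i _ => (hL2 i).integrable (by norm_num)]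
    simp [hW0]
  have hS2 : ∫ ω, (∑ i, W i ω) ^ 2 ∂P = m / 12 := by
    have := IndepFun.variance_sum (μ := P) (X := W) (s := Finset.univ) (fun i _ => hL2 i)
      (fun i _ j _ hij => hWi.indepFun hij)
    simp_rw [variance_of_integral_eq_zero (hWm _) (hW0 _), hW2] at this
    rw [variance_of_integral_eq_zero (by fun_prop) (by simpa using hS0)] at this
    simp [← hm] at this
    rw [this]; ring
  refine ⟨hSL2.integrable (by norm_num), ?_⟩
  set S : Ω → ℝ := fun ω => ∑ i, W i ω with hS
  have hr : 0 < √m := Real.sqrt_pos.2 hm0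
  have hrr : √m ^ 2 = m := Real.sq_sqrt hm0.le
  have e1 := hsg.integrable_exp_mul (1/√m)
  have e2 := hsg.integrable_exp_mul (-(1/√m))
  have b1 := hsg.mgf_le (1/√m)
  have b2 := hsg.mgf_le (-(1/√m))
  have hb : exp (m * (1/4) * (1/√m)^2/2) ≤ 2 := by
    rw [div_pow, hrr]
    have : m * (1/4) * (1^2/m)/2 = 1/8 := by field_simp; norm_num
    rw [this]
    have h1 := add_one_le_exp (-(1/8) : ℝ)
    have h2 : exp (-(1/8) : ℝ) * exp (1/8) = 1 := by rw [← exp_add]; simp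
    nlinarith [exp_pos (1/8 : ℝ)]
  have hc : ((∑ i : ι, (‖(1/2:ℝ) - (-1/2)‖₊ / 2) ^ 2 : NNReal) : ℝ) = m * (1/4) := by
    have : ‖(1/2:ℝ) - (-1/2)‖ = 1 := by norm_num
    push_cast
    rw [this]
    simp [← hm]; norm_num
  rw [hc] at b1 b2
  rw [neg_sq] at b2
  have b1' := b1.trans hb
  have b2' := b2.trans hb
  unfold mgf at b1' b2'
  have hSi : Integrable S P := hSL2.integrable (by norm_num)
  have hpt (ω) : 2 / (1600 * m) * S ω ^ 2 - 24 / 2560000 * (exp (1/√m * S ω) + exp (-(1/√m) * S ω))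
      ≤ 2 / (40 * √m) * |S ω| := by
    have h1 := key_ineq (S ω / (40 * √m))
    have h2 := pow_four_le (1 / √m * S ω)
    rw [abs_div, abs_of_pos (by positivity : 0 < 40 * √m), div_pow, mul_pow, hrr] at h1
    have e3 : (S ω / (40 * √m)) ^ 4 = 1 / 2560000 * (1 / √m * S ω) ^ 4 := by
      field_simp; norm_num
    rw [e3] at h1
    rw [neg_mul]
    have e4 : 2 / (1600 * m) * S ω ^ 2 = 2 * (S ω ^ 2 / (40 ^ 2 * m)) := by
      field_simp; ring
    have e5 : 2 / (40 * √m) * |S ω| = 2 * (|S ω| / (40 * √m)) := by ring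
    rw [e4, e5]
    linarith
  have i2 : Integrable (fun ω => 2 / (1600 * m) * S ω ^ 2) P := hSL2.integrable_sq.const_mul _
  have i3 : Integrable (fun ω => 24 / 2560000 * (exp (1/√m * S ω) + exp (-(1/√m) * S ω))) P :=
    (e1.add e2).const_mul _
  have hint := integral_mono (i2.sub i3) (hSi.abs.const_mul (2 / (40 * √m))) hpt
  simp only [Pi.sub_apply] at hint
  rw [integral_sub i2 i3, integral_const_mul, integral_const_mul, integral_const_mul,
    integral_add e1 e2, hS2] at hint
  have e6 : 2 / (1600 * m) * (m / 12) = 1 / 9600 := by field_simp; norm_num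
  rw [e6] at hint
  have h7 : 1 / 20000 ≤ 2 / (40 * √m) * ∫ ω, |S ω| ∂P := by linarith
  have e8 : 2 / (40 * √m) * ∫ ω, |S ω| ∂P = (∫ ω, |S ω| ∂P) / (20 * √m) := by field_simp; ring
  rw [e8, le_div_iff₀ (by positivity)] at h7
  linarith
end

lemma part_one {n : ℕ} (hn : 1 ≤ n) {Ω : Type*} [MeasurableSpace Ω] {P : Measure Ω}
    (X Y : Fin n → Ω → ℝ) (hi : Integrable (fun ω => ∑ k, (X k ω - Y k ω)) P) :
    ENNReal.ofReal ((1 / n : ℝ) * ∫ ω, |∑ k, (X k ω - Y k ω)| ∂P)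
          ≤ ∫⁻ ω, W1 (empMeasure X ω) (empMeasure Y ω) ∂P := by
  rw [← integral_const_mul, ofReal_integral_eq_lintegral_ofReal (hi.abs.const_mul _)
    (.of_forall fun _ => by positivity)]
  exact lintegral_mono fun ω => W1_ge hn X Y ω

lemma both {n : ℕ} (hn : 1 ≤ n) {Ω : Type*} [MeasurableSpace Ω] {P : Measure Ω}
    [IsProbabilityMeasure P] (X Y : Fin n → Ω → ℝ) (h : iIndepFun (Sum.elim X Y) P)
    (hX : ∀ k, P.map (X k) = uniformUnit) (hY : ∀ k, P.map (Y k) = uniformUnit) :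
    Integrable (fun ω => ∑ k, (X k ω - Y k ω)) P ∧
    √(2 * n) / 1000 ≤ ∫ ω, |∑ k, (X k ω - Y k ω)| ∂P := by
  have : Nonempty (Fin n) := ⟨⟨0, hn⟩⟩
  have := main_lower (Sum.elim X Y) (Sum.elim (fun _ => 1) (fun _ => -1))
    (by rintro (i | i) <;> simp) h (by rintro (i | i) <;> simp [hX, hY])
  have e (ω) : ∑ i, (Sum.elim (fun _ => 1) (fun _ => -1) i : ℝ) * (Sum.elim X Y i ω - 1 / 2) =
      ∑ k, (X k ω - Y k ω) := by
    rw [Fintype.sum_sum_type, ← Finset.sum_add_distrib]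
    refine Finset.sum_congr rfl fun k _ => ?_
    simp only [Sum.elim_inl, Sum.elim_inr]; ring
  simp only [e, Fintype.card_sum, Fintype.card_fin] at this
  rw [two_mul]
  exact_mod_cast this

/-- Lower bound in dimension one: `E(W₁(μ_n,ν_n)) ≥ (1/n) E|Σ_k (X_k − Y_k)|`, and
consequently `E(W₁(μ_n,ν_n)) ≥ c/√n` for an absolute constant `c > 0`. -/
theorem W1_lower_bound_dim_one :
    (∀ (n : ℕ) (Ω : Type) (_ : MeasurableSpace Ω) (P : Measure Ω),
      IsProbabilityMeasure P →
      ∀ (X Y : Fin n → Ω → ℝ),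
        iIndepFun (Sum.elim X Y) P →
        (∀ k, P.map (X k) = uniformUnit) →
        (∀ k, P.map (Y k) = uniformUnit) →
        ENNReal.ofReal ((1 / n : ℝ) * ∫ ω, |∑ k, (X k ω - Y k ω)| ∂P)
          ≤ ∫⁻ ω, W1 (empMeasure X ω) (empMeasure Y ω) ∂P) ∧
    ∃ c : ℝ, 0 < c ∧
      ∀ (n : ℕ), 1 ≤ n →
      ∀ (Ω : Type) (_ : MeasurableSpace Ω) (P : Measure Ω), IsProbabilityMeasure P →
      ∀ (X Y : Fin n → Ω → ℝ),
        iIndepFun (Sum.elim X Y) P →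
        (∀ k, P.map (X k) = uniformUnit) →
        (∀ k, P.map (Y k) = uniformUnit) →
        ENNReal.ofReal (c / Real.sqrt n)
          ≤ ∫⁻ ω, W1 (empMeasure X ω) (empMeasure Y ω) ∂P := by
  refine ⟨?_, 1 / 1000, by norm_num, ?_⟩
  · intro n Ω _ P _ X Y h hX hY
    rcases Nat.eq_zero_or_pos n with rfl | hn
    · simp
    · exact part_one hn X Y (both hn X Y h hX hY).1
  · intro n hn Ω _ P _ X Y h hX hY
    obtain ⟨h1, h2⟩ := both hn X Y h hX hY
    refine le_trans (ENNReal.ofReal_le_ofReal ?_) (part_one hn X Y h1)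
    have hn0 : (0:ℝ) < n := by exact_mod_cast hn
    have hr : 0 < √(n:ℝ) := Real.sqrt_pos.2 hn0
    have h3 : √(n:ℝ) ≤ √(2 * n) := Real.sqrt_le_sqrt (by linarith)
    have h4 : 1 / 1000 / √(n:ℝ) = 1 / n * (√n / 1000) := by
      have := Real.sq_sqrt hn0.le
      field_simp
      linarith
    rw [h4]
    gcongr
    linarith
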